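/- Fix positions s₀₀, s₀₂, s₁₀, s₁₁, s₂₁, s₂₂ ∈ V and let M : Matrix (Fin 3 × V) (Fin 3 × V) 𝔽₂ be the block matrix whose (0,0), (0,2), (1,0), (1,1), (2,1), (2,2) blocks are the DPMs D^(s₀₀), D^(s₀₂), D^(s₁₀), D^(s₁₁), D^(s₂₁), D^(s₂₂) respectively, and whose remaining three blocks are zero. Then the Tanner graph of M contains a cycle of length 6 if and only if s₀₀ + s₀₂ + s₁₀ + s₁₁ + s₂₁ + s₂₂ = 0 in V. -/

import Mathlib

/-- `V ℓ` is the 𝔽₂-vector space `Fin ℓ → ZMod 2` with bitwise-XOR addition. -/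
abbrev V (ℓ : ℕ) := Fin ℓ → ZMod 2

/-- The Tanner graph of a binary matrix `H`: `Sum.inl r` and `Sum.inr c` are adjacent
iff `H r c = 1`, and there are no other adjacencies. -/
def tanner {R C : Type*} (H : Matrix R C (ZMod 2)) : SimpleGraph (R ⊕ C) :=
  SimpleGraph.fromRel fun x y =>
    match x, y with
    | Sum.inl r, Sum.inr c => H r c = 1
    | _, _ => False

theorem tanner_adj_inl_inr {R C : Type*} (H : Matrix R C (ZMod 2)) (r : R) (c : C) :
    (tanner H).Adj (Sum.inl r) (Sum.inr c) ↔ H r c = 1 := by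
  simp [tanner]

theorem tanner_adj_inr_inl {R C : Type*} (H : Matrix R C (ZMod 2)) (r : R) (c : C) :
    (tanner H).Adj (Sum.inr c) (Sum.inl r) ↔ H r c = 1 := by
  simp [tanner]

theorem not_tanner_adj_inl_inl {R C : Type*} (H : Matrix R C (ZMod 2)) (r r' : R) :
    ¬ (tanner H).Adj (Sum.inl r) (Sum.inl r') := by
  simp [tanner]

theorem not_tanner_adj_inr_inr {R C : Type*} (H : Matrix R C (ZMod 2)) (c c' : C) :
    ¬ (tanner H).Adj (Sum.inr c) (Sum.inr c') := by
  simp [tanner]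

/-- A Tanner graph has a 6-cycle iff the matrix has a hexagon of ones on three distinct rows and
three distinct columns. -/
theorem tanner_exists_six_cycle_iff {R C : Type*} (H : Matrix R C (ZMod 2)) :
    (∃ (v : R ⊕ C) (c : (tanner H).Walk v v), c.IsCycle ∧ c.length = 6) ↔
    ∃ (r₀ r₁ r₂ : R) (c₀ c₁ c₂ : C), (r₀ ≠ r₁ ∧ r₁ ≠ r₂ ∧ r₀ ≠ r₂) ∧
      (c₀ ≠ c₁ ∧ c₁ ≠ c₂ ∧ c₀ ≠ c₂) ∧ H r₀ c₀ = 1 ∧ H r₁ c₀ = 1 ∧ H r₁ c₁ = 1 ∧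
      H r₂ c₁ = 1 ∧ H r₂ c₂ = 1 ∧ H r₀ c₂ = 1 := by
  constructor
  · rintro ⟨v, c, hc, hl⟩
    have hnodup := hc.support_nodup
    clear hc
    obtain _ | ⟨h₀, c⟩ := c
    · simp at hl
    obtain _ | ⟨h₁, c⟩ := c
    · simp at hl
    obtain _ | ⟨h₂, c⟩ := c
    · simp at hl
    obtain _ | ⟨h₃, c⟩ := c
    · simp at hl
    obtain _ | ⟨h₄, c⟩ := c
    · simp at hl
    obtain _ | ⟨h₅, c⟩ := c
    · simp at hl
    obtain _ | ⟨h₆, c⟩ := c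
    swap
    · simp at hl
    rename_i x₁ x₂ x₃ x₄ x₅
    rcases v with v | v <;> rcases x₁ with x₁ | x₁ <;>
      first
      | exact (not_tanner_adj_inl_inl _ _ _ h₀).elim
      | exact (not_tanner_adj_inr_inr _ _ _ h₀).elim
      | skip
    all_goals
      rcases x₂ with x₂ | x₂ <;>
        first
        | exact (not_tanner_adj_inl_inl _ _ _ h₁).elim
        | exact (not_tanner_adj_inr_inr _ _ _ h₁).elim
        | skip
      rcases x₃ with x₃ | x₃ <;>
        first
        | exact (not_tanner_adj_inl_inl _ _ _ h₂).elim
        | exact (not_tanner_adj_inr_inr _ _ _ h₂).elim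
        | skip
      rcases x₄ with x₄ | x₄ <;>
        first
        | exact (not_tanner_adj_inl_inl _ _ _ h₃).elim
        | exact (not_tanner_adj_inr_inr _ _ _ h₃).elim
        | skip
      rcases x₅ with x₅ | x₅ <;>
        first
        | exact (not_tanner_adj_inl_inl _ _ _ h₄).elim
        | exact (not_tanner_adj_inr_inr _ _ _ h₄).elim
        | skip
      simp only [tanner_adj_inl_inr, tanner_adj_inr_inl] at h₀ h₁ h₂ h₃ h₄ h₅
      simp at hnodup
    · exact ⟨v, x₂, x₄, x₁, x₃, x₅, by grind, by grind, h₀, h₁, h₂, h₃, h₄, h₅⟩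
    · exact ⟨x₁, x₃, x₅, x₂, x₄, v, by grind, by grind, h₁, h₂, h₃, h₄, h₅, h₀⟩
  · rintro ⟨r₀, r₁, r₂, c₀, c₁, c₂, ⟨hr₀₁, hr₁₂, hr₀₂⟩, ⟨hc₀₁, hc₁₂, hc₀₂⟩,
      h₀, h₁, h₂, h₃, h₄, h₅⟩
    refine ⟨Sum.inl r₀, .cons ((tanner_adj_inl_inr H r₀ c₀).2 h₀) <|
      .cons ((tanner_adj_inr_inl H r₁ c₀).2 h₁) <| .cons ((tanner_adj_inl_inr H r₁ c₁).2 h₂) <|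
      .cons ((tanner_adj_inr_inl H r₂ c₁).2 h₃) <| .cons ((tanner_adj_inl_inr H r₂ c₂).2 h₄) <|
      .cons ((tanner_adj_inr_inl H r₀ c₂).2 h₅) .nil, ?_, rfl⟩
    rw [SimpleGraph.Walk.cons_isCycle_iff, SimpleGraph.Walk.isPath_def]
    simp
    grind

/-- For the `3 × 3` block matrix with DPM blocks in positions
`(0,0), (0,2), (1,0), (1,1), (2,1), (2,2)` and zero blocks elsewhere, the Tanner graph
contains a length-6 cycle iff the sum of the six positions vanishes. -/
theorem dpmArray3x3_six_cycle_iff (ℓ : ℕ)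
    (s00 s02 s10 s11 s21 s22 : V ℓ)
    (M : Matrix (Fin 3 × V ℓ) (Fin 3 × V ℓ) (ZMod 2))
    (hM00 : ∀ a b : V ℓ, M (0, a) (0, b) = if a + b = s00 then 1 else 0)
    (hM01 : ∀ a b : V ℓ, M (0, a) (1, b) = 0)
    (hM02 : ∀ a b : V ℓ, M (0, a) (2, b) = if a + b = s02 then 1 else 0)
    (hM10 : ∀ a b : V ℓ, M (1, a) (0, b) = if a + b = s10 then 1 else 0)
    (hM11 : ∀ a b : V ℓ, M (1, a) (1, b) = if a + b = s11 then 1 else 0)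
    (hM12 : ∀ a b : V ℓ, M (1, a) (2, b) = 0)
    (hM20 : ∀ a b : V ℓ, M (2, a) (0, b) = 0)
    (hM21 : ∀ a b : V ℓ, M (2, a) (1, b) = if a + b = s21 then 1 else 0)
    (hM22 : ∀ a b : V ℓ, M (2, a) (2, b) = if a + b = s22 then 1 else 0) :
    (∃ (v : (Fin 3 × V ℓ) ⊕ (Fin 3 × V ℓ)) (c : (tanner M).Walk v v),
      c.IsCycle ∧ c.length = 6) ↔
    s00 + s02 + s10 + s11 + s21 + s22 = 0 := by
  rw [tanner_exists_six_cycle_iff]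
  have hV : ∀ x : V ℓ, x + x = 0 := fun x =>
    funext fun k => CharTwo.add_self_eq_zero (x k)
  constructor
  · rintro ⟨⟨i₀, a₀⟩, ⟨i₁, a₁⟩, ⟨i₂, a₂⟩, ⟨j₀, b₀⟩, ⟨j₁, b₁⟩, ⟨j₂, b₂⟩, ⟨hr₀₁, hr₁₂, hr₀₂⟩,
      ⟨hc₀₁, hc₁₂, hc₀₂⟩, h₀, h₁, h₂, h₃, h₄, h₅⟩
    have h3 : ∀ i : Fin 3, i = 0 ∨ i = 1 ∨ i = 2 := by decide
    have hadd : ∀ i j, ∃ s, ∀ a b, M (i, a) (j, b) = 1 → a + b = s := by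
      intro i j
      rcases h3 i with rfl | rfl | rfl <;> rcases h3 j with rfl | rfl | rfl <;>
        simp only [hM00, hM01, hM02, hM10, hM11, hM12, hM20, hM21, hM22, zero_ne_one,
          ite_eq_left_iff, imp_false, not_not, IsEmpty.forall_iff, implies_true, exists_const] <;>
        exact ⟨_, fun _ _ h => h⟩
    have hrow : ∀ i a a' j b, M (i, a) (j, b) = 1 → M (i, a') (j, b) = 1 → a = a' := by
      intro i a a' j b h h'
      obtain ⟨s, hs⟩ := hadd i j
      exact add_right_cancel ((hs _ _ h).trans (hs _ _ h').symm)
    have hcol : ∀ i a j b b', M (i, a) (j, b) = 1 → M (i, a) (j, b') = 1 → b = b' := by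
      intro i a j b b' h h'
      obtain ⟨s, hs⟩ := hadd i j
      exact add_left_cancel ((hs _ _ h).trans (hs _ _ h').symm)
    have hi₀₁ : i₀ ≠ i₁ := by
      rintro rfl
      exact hr₀₁ (by rw [hrow _ _ _ _ _ h₀ h₁])
    have hi₁₂ : i₁ ≠ i₂ := by
      rintro rfl
      exact hr₁₂ (by rw [hrow _ _ _ _ _ h₂ h₃])
    have hi₀₂ : i₀ ≠ i₂ := by
      rintro rfl
      exact hr₀₂ (by rw [hrow _ _ _ _ _ h₅ h₄])
    have hj₀₁ : j₀ ≠ j₁ := by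
      rintro rfl
      exact hc₀₁ (by rw [hcol _ _ _ _ _ h₁ h₂])
    have hj₁₂ : j₁ ≠ j₂ := by
      rintro rfl
      exact hc₁₂ (by rw [hcol _ _ _ _ _ h₃ h₄])
    have hj₀₂ : j₀ ≠ j₂ := by
      rintro rfl
      exact hc₀₂ (by rw [hcol _ _ _ _ _ h₀ h₅])
    clear hr₀₁ hr₁₂ hr₀₂ hc₀₁ hc₁₂ hc₀₂ hrow hcol hadd
    have hsum : (a₀ + b₀) + (a₁ + b₀) + (a₁ + b₁) + (a₂ + b₁) + (a₂ + b₂) + (a₀ + b₂) = 0 := by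
      calc _ = (a₀ + a₀) + (a₁ + a₁) + (a₂ + a₂) + (b₀ + b₀) + (b₁ + b₁) + (b₂ + b₂) := by abel
        _ = 0 := by simp only [hV]
    rcases h3 i₀ with rfl | rfl | rfl
    all_goals
      rcases h3 j₀ with rfl | rfl | rfl <;>
        first
        | simp only [hM01, hM12, hM20, zero_ne_one] at h₀
        | skip
    all_goals
      rcases h3 i₁ with rfl | rfl | rfl <;>
        first
        | exact (hi₀₁ rfl).elim
        | simp only [hM01, hM12, hM20, zero_ne_one] at h₁
        | skip
    all_goals
      rcases h3 j₁ with rfl | rfl | rfl <;>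
        first
        | exact (hj₀₁ rfl).elim
        | simp only [hM01, hM12, hM20, zero_ne_one] at h₂
        | skip
    all_goals
      rcases h3 i₂ with rfl | rfl | rfl <;>
        first
        | exact (hi₀₂ rfl).elim
        | exact (hi₁₂ rfl).elim
        | simp only [hM01, hM12, hM20, zero_ne_one] at h₃
        | skip
    all_goals
      rcases h3 j₂ with rfl | rfl | rfl <;>
        first
        | exact (hj₀₂ rfl).elim
        | exact (hj₁₂ rfl).elim
        | simp only [hM01, hM12, hM20, zero_ne_one] at h₄
        | simp only [hM01, hM12, hM20, zero_ne_one] at h₅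
        | skip
    all_goals
      simp only [hM00, hM02, hM10, hM11, hM21, hM22, ite_eq_left_iff, zero_ne_one, imp_false,
        not_not] at h₀ h₁ h₂ h₃ h₄ h₅
      rw [h₀, h₁, h₂, h₃, h₄, h₅] at hsum
      rw [← hsum]
      abel
  · intro h
    refine ⟨(0, 0), (1, s00 + s10), (2, s00 + s10 + s11 + s21), (0, s00), (1, s00 + s10 + s11),
      (2, s02), by simp, by simp, ?_⟩
    have h22 : s00 + s10 + s11 + s21 + s02 = s22 := by
      rw [← add_left_inj s22, hV, ← h]
      abel
    have hcancel : ∀ x y : V ℓ, x + y + x = y := fun x y => by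
      rw [add_right_comm, hV, zero_add]
    have hcancel' : ∀ x y : V ℓ, x + (x + y) = y := fun x y => by
      rw [← add_assoc, hV, zero_add]
    simp [hM00, hM02, hM10, hM11, hM21, hM22, h22, hcancel, hcancel']
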